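/- arXiv:2503.00181 — 2 statements merged into one kernel-verified Lean document; each statement's English description precedes it below -/
import Mathlib

section
/- Let Δ be an (m,n)-invariant set, bounded and co-bounded, with n-generators a_0 < a_1 < ... < a_{n-1}. Then for each i, the element a_i is an m-generator of the set Δ^{(i)} = Δ \ {a_0, ..., a_{i-1}}, i.e., a_i − m ∉ Δ^{(i)}. -/
/-- The shift of a set of integers: `Δ + k`. -/
def shiftSet (Δ : Set ℤ) (k : ℤ) : Set ℤ := (· + k) '' Δ

/-- `Δ` is `k`-invariant if `Δ + k ⊆ Δ`. -/
def Invariant (k : ℤ) (Δ : Set ℤ) : Prop := shiftSet Δ k ⊆ Δ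

/-- `Δ` is bounded (has a minimum element). -/
def HasMin (Δ : Set ℤ) : Prop := ∃ a ∈ Δ, ∀ x ∈ Δ, a ≤ x

/-- `Δ` is co-bounded: contains all sufficiently large integers. -/
def CoBounded (Δ : Set ℤ) : Prop := ∃ N : ℤ, ∀ x : ℤ, N ≤ x → x ∈ Δ

/-- The `k`-generators of `Δ`: elements `a ∈ Δ` with `a - k ∉ Δ`, i.e. `Δ \ (Δ + k)`. -/
def gens (k : ℤ) (Δ : Set ℤ) : Set ℤ := Δ \ shiftSet Δ k

/-- The `(j+1)`-st smallest element of a set of integers. -/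
noncomputable def nthSmallest : ℕ → Set ℤ → ℤ
  | 0, S => sInf S
  | j+1, S => nthSmallest j (S \ {sInf S})

/-- The letter `j ∈ [m]` acts on an `m`-invariant set by removing its `(j+1)`-st
smallest `m`-generator. -/
noncomputable def letterAct (m : ℤ) (j : ℕ) (Δ : Set ℤ) : Set ℤ :=
  Δ \ {nthSmallest j (gens m Δ)}

/-- `steps m p Δ i = p_{i-1} ⋯ p_1 p_0 ⋅ Δ`: the word acts one letter at a
time, the letter `p 0` (rightmost) acting first. -/
noncomputable def steps (m : ℤ) (p : ℕ → ℕ) (Δ : Set ℤ) : ℕ → Set ℤ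
  | 0 => Δ
  | i+1 => letterAct m (p i) (steps m p Δ i)

/-- If `a_0 < a_1 < … < a_{n-1}` are the `n`-generators of a bounded, co-bounded
`(m,n)`-invariant set `Δ`, then `a_i` is an `m`-generator of
`Δ^{(i)} = Δ \ {a_0, …, a_{i-1}}`. -/
theorem n_generator_is_m_generator (m n : ℕ) (hm : 0 < m) (hn : 0 < n) (Δ : Set ℤ)
    (hIm : Invariant m Δ) (hIn : Invariant n Δ) (hb : HasMin Δ) (hc : CoBounded Δ)
    (a : Fin n → ℤ) (ha : StrictMono a) (hrange : Set.range a = gens n Δ) :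
    ∀ i : Fin n,
      a i ∈ Δ \ (a '' {k : Fin n | k < i}) ∧
      a i - m ∉ Δ \ (a '' {k : Fin n | k < i}) := by
  intro i
  have hi : a i ∈ gens n Δ := hrange ▸ Set.mem_range_self i
  refine ⟨⟨hi.1, ?_⟩, ?_⟩
  · rintro ⟨k, hk, hki⟩
    exact (ne_of_lt hk) (ha.injective hki)
  · rintro ⟨h1, h2⟩
    have hg : a i - m ∈ gens n Δ := by
      refine ⟨h1, ?_⟩
      rintro ⟨y, hy, hyn⟩
      have hyn' : y + n = a i - m := hyn
      refine hi.2 ⟨y + m, hIm ⟨y, hy, rfl⟩, ?_⟩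
      show y + m + n = a i
      linarith
    rw [← hrange] at hg
    obtain ⟨k, hk⟩ := hg
    refine h2 ⟨k, ?_, hk⟩
    have hlt : a k < a i := by omega
    exact ha.lt_iff_lt.mp hlt
end

section
/- Let gcd(m,n) = 1, p ∈ [m]^n an (m,n)-parking function with unique fixed point x_p ∈ V^m, and A_p the alcove containing x_p. Then for every x ∈ V^m the orbit {p^k · x} is eventually periodic with period dividing m: there exists k ≥ 0 with p^{k+m} · x = p^k · x. -/
/-- The shift during the action of letter `i` on `ℝ^m`: add `m` to coordinate `i`
and subtract `1` from every coordinate. -/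
def shiftVec (m : ℕ) (i : Fin m) (x : Fin m → ℝ) : Fin m → ℝ :=
  fun j => x j - 1 + if j = i then (m : ℝ) else 0

/-- Sort the coordinates of a vector into weakly increasing order. -/
noncomputable def sortVec {m : ℕ} (x : Fin m → ℝ) : Fin m → ℝ := x ∘ Tuple.sort x

/-- The action of the letter `i ∈ [m]` on `V^m`: shift, then re-sort. -/
noncomputable def letterV (m : ℕ) (i : Fin m) (x : Fin m → ℝ) : Fin m → ℝ :=
  sortVec (shiftVec m i x)

/-- `stepsV m p x i = p_{i-1} ⋯ p_1 p_0 ⋅ x`: the word acts letter by letter, the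
letter `p 0` (rightmost) acting first. -/
noncomputable def stepsV (m : ℕ) (p : ℕ → Fin m) (x : Fin m → ℝ) : ℕ → (Fin m → ℝ)
  | 0 => x
  | k+1 => letterV m (p k) (stepsV m p x k)

/-- Membership in the Weyl chamber `V^m`: coordinates sum to `0` and are weakly
increasing. -/
def InV (m : ℕ) (x : Fin m → ℝ) : Prop := (∑ j, x j) = 0 ∧ Monotone x

/-- The Euclidean norm on `ℝ^m`. -/
noncomputable def eNorm {m : ℕ} (x : Fin m → ℝ) : ℝ := Real.sqrt (∑ j, (x j) ^ 2)

/-- `p` (a word of length `n` in `[m]`, extended arbitrarily) is an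
`(m,n)`-parking function: `#{j < n : p_j < i} ≥ i·n/m` for all `1 ≤ i ≤ m`. -/
def IsParking (m n : ℕ) (p : ℕ → Fin m) : Prop :=
  ∀ i : ℕ, 1 ≤ i → i ≤ m →
    i * n ≤ ((Finset.range n).filter (fun j => (p j : ℕ) < i)).card * m

/-- squared Euclidean norm -/
def QQ {m : ℕ} (x : Fin m → ℝ) : ℝ := ∑ j, (x j) ^ 2

lemma QQ_comp_perm {m : ℕ} (x : Fin m → ℝ) (s : Equiv.Perm (Fin m)) : QQ (x ∘ s) = QQ x := by
  unfold QQ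
  exact Equiv.sum_comp s (fun j => x j ^ 2)

lemma QQ_nonneg {m : ℕ} (x : Fin m → ℝ) : 0 ≤ QQ x :=
  Finset.sum_nonneg (fun _ _ => sq_nonneg _)

lemma QQ_eq_zero {m : ℕ} {x : Fin m → ℝ} (h : QQ x ≤ 0) : x = 0 := by
  have h0 : QQ x = 0 := le_antisymm h (QQ_nonneg x)
  unfold QQ at h0
  rw [Finset.sum_eq_zero_iff_of_nonneg (fun _ _ => sq_nonneg _)] at h0
  funext j
  simpa using h0 j (Finset.mem_univ j)

lemma sq_le_QQ {m : ℕ} (x : Fin m → ℝ) (j : Fin m) : (x j) ^ 2 ≤ QQ x :=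
  Finset.single_le_sum (f := fun j => (x j) ^ 2) (fun _ _ => sq_nonneg _) (Finset.mem_univ j)

lemma sortVec_mono {m : ℕ} (x : Fin m → ℝ) : Monotone (sortVec x) := Tuple.monotone_sort x

lemma sortVec_eq {m : ℕ} (x : Fin m → ℝ) (s : Equiv.Perm (Fin m)) (h : Monotone (x ∘ s)) :
    sortVec x = x ∘ s := by
  unfold sortVec
  exact (Tuple.comp_sort_eq_comp_iff_monotone.mpr h).symm ▸ rfl

lemma sortVec_of_mono {m : ℕ} (x : Fin m → ℝ) (h : Monotone x) : sortVec x = x :=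
  sortVec_eq x 1 h

lemma sort_contract {m : ℕ} (a b : Fin m → ℝ) :
    QQ (sortVec a - sortVec b) ≤ QQ (a - b) := by
  have e1 : QQ (sortVec a - sortVec b) =
      QQ a + QQ b - 2 * ∑ j, sortVec a j * sortVec b j := by
    rw [← QQ_comp_perm a (Tuple.sort a), ← QQ_comp_perm b (Tuple.sort b)]
    unfold QQ sortVec
    rw [Finset.mul_sum, ← Finset.sum_add_distrib, ← Finset.sum_sub_distrib]
    refine Finset.sum_congr rfl fun j _ => ?_
    simp only [Pi.sub_apply]; ring
  have e2 : QQ (a - b) = QQ a + QQ b - 2 * ∑ j, a j * b j := by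
    unfold QQ
    rw [Finset.mul_sum, ← Finset.sum_add_distrib, ← Finset.sum_sub_distrib]
    refine Finset.sum_congr rfl fun j _ => ?_
    simp only [Pi.sub_apply]; ring
  have hmv : Monovary (sortVec a) (sortVec b) := (sortVec_mono a).monovary (sortVec_mono b)
  have h := hmv.sum_mul_comp_perm_le_sum_mul (σ := (Tuple.sort a).trans (Tuple.sort b).symm)
  have e3 : ∑ j, sortVec a j * sortVec b (((Tuple.sort a).trans (Tuple.sort b).symm) j)
      = ∑ j, a j * b j := by
    rw [← Equiv.sum_comp (Tuple.sort a) (fun j => a j * b j)]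
    refine Finset.sum_congr rfl fun j _ => ?_
    simp [sortVec]
  rw [e1, e2]; linarith

lemma letter_contract {m : ℕ} (i : Fin m) (a b : Fin m → ℝ) :
    QQ (letterV m i a - letterV m i b) ≤ QQ (a - b) := by
  have : shiftVec m i a - shiftVec m i b = a - b := by
    funext j; simp [shiftVec]
  rw [← this]; exact sort_contract _ _

lemma steps_contract {m : ℕ} (q : ℕ → Fin m) (a b : Fin m → ℝ) (t : ℕ) :
    QQ (stepsV m q a t - stepsV m q b t) ≤ QQ (a - b) := by
  induction t with
  | zero => exact le_rfl
  | succ t ih => exact (letter_contract _ _ _).trans ih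

lemma letter_InV {m : ℕ} (i : Fin m) (a : Fin m → ℝ) (h : InV m a) :
    InV m (letterV m i a) := by
  refine ⟨?_, sortVec_mono _⟩
  unfold letterV sortVec
  have := Equiv.sum_comp (Tuple.sort (shiftVec m i a)) (shiftVec m i a)
  simp only [Function.comp]
  rw [this]
  unfold shiftVec
  rw [Finset.sum_add_distrib, Finset.sum_sub_distrib, h.1]
  simp

lemma steps_InV {m : ℕ} (q : ℕ → Fin m) (a : Fin m → ℝ) (h : InV m a) (t : ℕ) :
    InV m (stepsV m q a t) := by
  induction t with
  | zero => exact h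
  | succ t ih => exact letter_InV _ _ ih

lemma steps_add {m n : ℕ} (p : ℕ → Fin m) (x : Fin m → ℝ) (k t : ℕ) :
    stepsV m (fun i => p (i % n)) x (n * k + t) =
      stepsV m (fun i => p (i % n)) (stepsV m (fun i => p (i % n)) x (n * k)) t := by
  induction t with
  | zero => rfl
  | succ t ih =>
    rw [← add_assoc]
    simp only [stepsV]
    rw [ih, Nat.mul_add_mod]

/-- Tracking of coordinates. -/
lemma steps_track {m : ℕ} (q : ℕ → Fin m) (x : Fin m → ℝ) (t : ℕ) :
    ∃ (s : Equiv.Perm (Fin m)) (c : Fin m → ℤ),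
      ∀ j, stepsV m q x t j = x (s j) - t + m * c j := by
  induction t with
  | zero => exact ⟨1, 0, fun j => by simp [stepsV]⟩
  | succ t ih =>
    obtain ⟨s, c, h⟩ := ih
    set r := Tuple.sort (shiftVec m (q t) (stepsV m q x t)) with hr
    refine ⟨r.trans s, fun j => c (r j) + if r j = q t then 1 else 0, fun j => ?_⟩
    have : stepsV m q x (t+1) j = shiftVec m (q t) (stepsV m q x t) (r j) := rfl
    rw [this]
    unfold shiftVec
    rw [h]
    simp only [Equiv.trans_apply]
    split_ifs <;> push_cast <;> ring

/-- Local isometry near a point with separated residues. -/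
lemma steps_local {m : ℕ} (q : ℕ → Fin m) (x : Fin m → ℝ)
    (hdiff : ∀ i j, ∃ a : ℤ, x i - x j = a)
    (hres : ∀ i j, (∃ a : ℤ, x i - x j = m * a) → i = j) (t : ℕ) :
    ∃ (s : Equiv.Perm (Fin m)) (c : Fin m → ℤ),
      ∀ d : Fin m → ℝ, (∀ j, |d j| < 1/2) →
      ∀ j, stepsV m q (x + d) t j = x (s j) + d (s j) - t + m * c j := by
  induction t with
  | zero => exact ⟨1, 0, fun d _ j => by simp [stepsV]⟩
  | succ t ih =>
    obtain ⟨s, c, h⟩ := ih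
    set r := Tuple.sort (shiftVec m (q t) (stepsV m q x t)) with hr
    have h0 : ∀ j, stepsV m q x t j = x (s j) - t + m * c j := by
      intro j
      have := h 0 (by intro j; norm_num) j
      simpa using this
    set c' : Fin m → ℤ := fun j => c j + if j = q t then 1 else 0 with hc'
    have hb : ∀ j, shiftVec m (q t) (stepsV m q x t) j = x (s j) - (t+1) + m * c' j := by
      intro j
      unfold shiftVec
      rw [h0, hc']
      split_ifs <;> simp_all <;> ring
    refine ⟨r.trans s, fun j => c' (r j), fun d hd j => ?_⟩
    have hbd : ∀ j, shiftVec m (q t) (stepsV m q (x+d) t) j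
        = x (s j) + d (s j) - (t+1) + m * c' j := by
      intro j
      unfold shiftVec
      rw [h d hd, hc']
      split_ifs <;> simp_all <;> ring
    have hmono : Monotone (shiftVec m (q t) (stepsV m q (x+d) t) ∘ r) := by
      intro i j hij
      rcases eq_or_ne i j with rfl | hne
      · exact le_rfl
      have hle : shiftVec m (q t) (stepsV m q x t) (r i) ≤
          shiftVec m (q t) (stepsV m q x t) (r j) :=
        Tuple.monotone_sort (shiftVec m (q t) (stepsV m q x t)) hij
      simp only [Function.comp]
      rw [hbd, hbd]
      rw [hb, hb] at hle
      obtain ⟨a, ha⟩ := hdiff (s (r j)) (s (r i))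
      have hpos : (0:ℤ) ≤ a + m * c' (r j) - m * c' (r i) := by
        have : (0:ℝ) ≤ ((a + m * c' (r j) - m * c' (r i) : ℤ) : ℝ) := by
          push_cast; linarith
        exact_mod_cast this
      have hnz : a + m * c' (r j) - m * c' (r i) ≠ 0 := by
        intro h0
        apply hne
        have := hres (s (r j)) (s (r i)) ⟨c' (r i) - c' (r j), by
          rw [ha]
          have : a = m * (c' (r i) - c' (r j)) := by linarith
          rw [this]; push_cast; ring⟩
        exact (r.injective (s.injective this)).symm
      have h1 : (1:ℤ) ≤ a + m * c' (r j) - m * c' (r i) := by omega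
      have h1' : (1:ℝ) ≤ a + m * c' (r j) - m * c' (r i) := by exact_mod_cast h1
      have d1 := abs_lt.mp (hd (s (r i)))
      have d2 := abs_lt.mp (hd (s (r j)))
      linarith [d1.1, d1.2, d2.1, d2.2]
    have : stepsV m q (x+d) (t+1) = shiftVec m (q t) (stepsV m q (x+d) t) ∘ r :=
      sortVec_eq _ r hmono
    rw [this]
    simp only [Function.comp]
    rw [hbd]
    simp only [Equiv.trans_apply]
    push_cast; ring

/-- Residues of a fixed point. -/
lemma fixed_residues {m n : ℕ} (hm : 0 < m) (hcop : Nat.gcd m n = 1) (x : Fin m → ℝ)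
    (s : Equiv.Perm (Fin m)) (c : Fin m → ℤ)
    (h : ∀ j, x j = x (s j) - n + m * c j) :
    (∀ i j, ∃ a : ℤ, x i - x j = a) ∧
    (∀ i j, (∃ a : ℤ, x i - x j = m * a) → i = j) := by
  have hm' : (m:ℝ) ≠ 0 := by positivity
  have hk : ∀ k : ℕ, ∃ j, ∃ a : ℤ, x j = x ⟨0, hm⟩ + k * n + m * a := by
    intro k
    induction k with
    | zero => exact ⟨⟨0, hm⟩, 0, by simp⟩
    | succ k ih =>
      obtain ⟨j, a, hj⟩ := ih
      refine ⟨s j, a - c j, ?_⟩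
      have := h j
      push_cast
      linarith
  have hi : ∀ i : Fin m, ∃ j, ∃ a : ℤ, x j = x ⟨0, hm⟩ + (i:ℕ) + m * a := by
    intro i
    have hco : Nat.Coprime n m := by rw [Nat.coprime_comm]; exact hcop
    obtain ⟨k, -, hk'⟩ := Nat.exists_mul_mod_eq_of_coprime (k := m) (i:ℕ) hco (by omega)
    obtain ⟨j, a, hj⟩ := hk k
    refine ⟨j, a + ((n * k / m : ℕ):ℤ), ?_⟩
    rw [hj]
    have hd := Nat.mod_add_div (n * k) m
    generalize n * k / m = Q at hd ⊢
    have h2 : (i:ℕ) % m = i := Nat.mod_eq_of_lt i.2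
    have h3 : (i:ℕ) + m * Q = n * k := by omega
    have h3' : ((i:ℕ):ℝ) + m * (Q:ℝ) = n * k := by exact_mod_cast h3
    push_cast at h3' ⊢
    linarith
  choose φ a hφ using hi
  have hmod : ∀ i i' : Fin m, (∃ b : ℤ, ((i:ℕ):ℝ) - (i':ℕ) = m * b) → i = i' := by
    rintro i i' ⟨b, hb⟩
    have hb' : ((i:ℕ):ℤ) - (i':ℕ) = m * b := by exact_mod_cast hb
    have h1 := i.2
    have h2 := i'.2
    have hdvd : (m:ℤ) ∣ ((i:ℕ):ℤ) - (i':ℕ) := ⟨b, hb'⟩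
    have := Int.eq_zero_of_abs_lt_dvd hdvd (by rw [abs_lt]; constructor <;> omega)
    apply Fin.ext; omega
  have hinj : Function.Injective φ := by
    intro i i' hii
    apply hmod
    refine ⟨a i' - a i, ?_⟩
    have h1 := hφ i
    have h2 := hφ i'
    rw [hii] at h1
    push_cast
    linarith
  have hsurj : Function.Surjective φ := Finite.surjective_of_injective hinj
  constructor
  · intro i j
    obtain ⟨i, rfl⟩ := hsurj i
    obtain ⟨j, rfl⟩ := hsurj j
    refine ⟨(i:ℕ) - (j:ℕ) + m * a i - m * a j, ?_⟩
    rw [hφ, hφ]; push_cast; ring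
  · rintro i j ⟨b, hb⟩
    obtain ⟨i, rfl⟩ := hsurj i
    obtain ⟨j, rfl⟩ := hsurj j
    congr 1
    apply hmod
    refine ⟨b - a i + a j, ?_⟩
    rw [hφ, hφ] at hb
    push_cast
    linarith

lemma shift_QQ {m : ℕ} (i : Fin m) (y : Fin m → ℝ) :
    QQ (shiftVec m i y) = QQ y - 2 * ∑ j, y j + 2 * m * y i + (m^2 - m) := by
  have e : ∀ j, (shiftVec m i y j)^2 = (y j)^2 - 2 * y j + 1
      + (if j = i then 2 * m * (y j - 1) + (m:ℝ)^2 else 0) := by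
    intro j
    unfold shiftVec
    split_ifs <;> ring
  unfold QQ
  simp_rw [e]
  rw [Finset.sum_add_distrib, Finset.sum_add_distrib, Finset.sum_sub_distrib, ← Finset.mul_sum]
  simp
  ring

lemma letter_move {m : ℕ} (i : Fin m) (y : Fin m → ℝ) (hy : Monotone y) (j : Fin m) :
    letterV m i y j ≤ y j + m := by
  have h := sort_contract (shiftVec m i y) y
  rw [sortVec_of_mono y hy] at h
  have e : QQ (shiftVec m i y - y) = m^2 - m := by
    have : shiftVec m i y - y = shiftVec m i 0 := by
      funext j; simp [shiftVec]; ring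
    rw [this, shift_QQ]; simp [QQ]
  rw [e] at h
  have h2 := sq_le_QQ (sortVec (shiftVec m i y) - y) j
  have h3 : (sortVec (shiftVec m i y) j - y j)^2 ≤ (m:ℝ)^2 := by
    have : (0:ℝ) ≤ m := by positivity
    simp only [Pi.sub_apply] at h2
    linarith
  have h4 := abs_le_of_sq_le_sq h3 (by positivity)
  unfold letterV
  linarith [(abs_le.mp h4).2]

lemma steps_move {m : ℕ} (q : ℕ → Fin m) (y : Fin m → ℝ) (hy : InV m y) (t : ℕ) (j : Fin m) :
    stepsV m q y t j ≤ y j + m * t := by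
  induction t with
  | zero => simp [stepsV]
  | succ t ih =>
    have := letter_move (q t) (stepsV m q y t) (steps_InV q y hy t).2 j
    simp only [stepsV]
    push_cast
    linarith

lemma steps_QQ {m : ℕ} (q : ℕ → Fin m) (y : Fin m → ℝ) (hy : InV m y) (t : ℕ) :
    QQ (stepsV m q y t) ≤ QQ y + 2 * m * ∑ k ∈ Finset.range t, y (q k)
      + 2 * m^2 * t^2 + m^2 * t := by
  induction t with
  | zero => simp [stepsV]
  | succ t ih =>
    have e : QQ (stepsV m q y (t+1)) = QQ (shiftVec m (q t) (stepsV m q y t)) := QQ_comp_perm _ _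
    rw [e, shift_QQ, (steps_InV q y hy t).1, Finset.sum_range_succ]
    have h1 := steps_move q y hy t (q t)
    have h2 : 2 * m * stepsV m q y t (q t) ≤ 2 * m * (y (q t) + m * t) := by gcongr
    have h3 : (0:ℝ) ≤ m := by positivity
    push_cast
    have h4 : (0:ℝ) ≤ m^2 * t := by positivity
    nlinarith

/-- Abel summation. -/
lemma abel_fin (M : ℕ) (X : ℕ → ℝ) (i : ℕ) (hi : i ≤ M) :
    X i = X M - ∑ k ∈ Finset.range M, if i < k + 1 then X (k+1) - X k else 0 := by
  induction M, hi using Nat.le_induction with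
  | base =>
    rw [Finset.sum_eq_zero]
    · ring
    · intro k hk
      rw [Finset.mem_range] at hk
      rw [if_neg (by omega)]
  | succ M hM ih =>
    rw [Finset.sum_range_succ, if_pos (by omega)]
    linarith

lemma park_drift {m n : ℕ} (hm : 0 < m) (hcop : Nat.gcd m n = 1) (p : ℕ → Fin m)
    (hpark : IsParking m n p) (x : Fin m → ℝ) (hx : InV m x) (i j : Fin m) :
    m * ∑ k ∈ Finset.range n, x (p k) ≤ - (x i - x j) := by
  obtain ⟨M, rfl⟩ : ∃ M, m = M + 1 := ⟨m - 1, by omega⟩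
  set X : ℕ → ℝ := fun k => x ⟨min k M, by omega⟩ with hX
  have hXx : ∀ i : Fin (M+1), x i = X i := by
    intro i
    simp only [hX]
    congr 1
    apply Fin.ext
    have := i.2
    simp; omega
  have hmonoX : ∀ k, 0 ≤ X (k+1) - X k := by
    intro k
    have : X k ≤ X (k+1) := hx.2 (by simp [Fin.le_def])
    linarith
  have hab : ∀ i : Fin (M+1), x i = X M -
      ∑ k ∈ Finset.range M, if (i:ℕ) < k + 1 then X (k+1) - X k else 0 := by
    intro i
    rw [hXx]
    exact abel_fin M X i (by omega)
  have hs1 : ∑ k ∈ Finset.range n, x (p k) = n * X M -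
      ∑ k ∈ Finset.range M, (((Finset.range n).filter (fun j => (p j : ℕ) < k+1)).card : ℝ)
        * (X (k+1) - X k) := by
    simp_rw [fun k => hab (p k)]
    rw [Finset.sum_sub_distrib, Finset.sum_comm]
    congr 1
    · simp
    · refine Finset.sum_congr rfl fun k _ => ?_
      rw [← Finset.sum_filter, Finset.sum_const, nsmul_eq_mul]
  have hs2 : ∑ k, x k = (M+1) * X M - ∑ k ∈ Finset.range M, ((k:ℝ)+1) * (X (k+1) - X k) := by
    rw [Finset.sum_congr rfl (fun k _ => hab k)]
    rw [Finset.sum_sub_distrib, Finset.sum_comm]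
    congr 1
    · simp
    · refine Finset.sum_congr rfl fun k hk => ?_
      rw [Finset.mem_range] at hk
      rw [← Finset.sum_filter, Finset.sum_const, nsmul_eq_mul]
      congr 1
      have : (Finset.univ.filter (fun i : Fin (M+1) => (i:ℕ) < k+1)).card = k + 1 := by
        rw [Fin.card_filter_val_lt]; omega
      rw [this]; push_cast; ring
  rw [hx.1] at hs2
  have htel : ∑ k ∈ Finset.range M, (X (k+1) - X k) = X M - X 0 := Finset.sum_range_sub X M
  have hcount : ∀ k ∈ Finset.range M, ((k:ℝ)+1) * n * (X (k+1) - X k) + (X (k+1) - X k) ≤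
      (M+1) * ((((Finset.range n).filter (fun j => (p j : ℕ) < k+1)).card : ℝ)
        * (X (k+1) - X k)) := by
    intro k hk
    rw [Finset.mem_range] at hk
    have h1 := hpark (k+1) (by omega) (by omega)
    have h2 : (k+1) * n ≠ ((Finset.range n).filter (fun j => (p j : ℕ) < k+1)).card * (M+1) := by
      intro he
      have hd : (M+1) ∣ (k+1) * n := ⟨_, by rw [he, mul_comm]⟩
      have hd2 : (M+1) ∣ (k+1) := Nat.Coprime.dvd_of_dvd_mul_right hcop hd
      have := Nat.le_of_dvd (by omega) hd2
      omega
    have h3 : (k+1) * n + 1 ≤ ((Finset.range n).filter (fun j => (p j : ℕ) < k+1)).card * (M+1) := by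
      omega
    have h3' : ((k:ℝ)+1) * n + 1 ≤
        (((Finset.range n).filter (fun j => (p j : ℕ) < k+1)).card : ℝ) * (M+1) := by
      exact_mod_cast h3
    have := mul_le_mul_of_nonneg_right h3' (hmonoX k)
    nlinarith
  have hsum := Finset.sum_le_sum hcount
  rw [Finset.sum_add_distrib, htel, ← Finset.mul_sum] at hsum
  have e5 : ∑ k ∈ Finset.range M, ((k:ℝ)+1) * n * (X (k+1) - X k)
      = n * ∑ k ∈ Finset.range M, ((k:ℝ)+1) * (X (k+1) - X k) := by
    rw [Finset.mul_sum]; exact Finset.sum_congr rfl fun k _ => by ring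
  rw [e5] at hsum
  have hi : x i ≤ X M := hx.2 (by simp [Fin.le_def]; omega)
  have hj : X 0 ≤ x j := hx.2 (by simp [Fin.le_def])
  rw [hs1]
  push_cast
  have e6 : ∑ k ∈ Finset.range M, ((k:ℝ)+1) * (X (k+1) - X k) = (M+1) * X M := by linarith
  rw [e6] at hsum
  nlinarith

lemma steps_mod {m n : ℕ} (p : ℕ → Fin m) (y : Fin m → ℝ) :
    ∑ k ∈ Finset.range n, y (p (k % n)) = ∑ k ∈ Finset.range n, y (p k) := by
  refine Finset.sum_congr rfl fun k hk => ?_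
  rw [Nat.mod_eq_of_lt (Finset.mem_range.mp hk)]

/-- Invariant balls. -/
lemma ball_invariant {m n : ℕ} (hm : 0 < m) (hcop : Nat.gcd m n = 1) (p : ℕ → Fin m)
    (hpark : IsParking m n p) :
    ∃ R0 : ℝ, 0 ≤ R0 ∧ ∀ R, R0 ≤ R → ∀ x, InV m x → QQ x ≤ R →
      QQ (stepsV m (fun i => p (i % n)) x n) ≤ R := by
  set C : ℝ := 2 * m^2 * n^2 + m^2 * n with hC
  have hC0 : 0 ≤ C := by positivity
  refine ⟨m * C^2 + C, by positivity, fun R hR x hx hxR => ?_⟩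
  have h1 := steps_QQ (fun i => p (i % n)) x hx n
  rw [steps_mod] at h1
  set i : Fin m := ⟨m-1, by omega⟩
  set j : Fin m := ⟨0, hm⟩
  have h2 := park_drift hm hcop p hpark x hx i j
  have hr0 : 0 ≤ x i - x j := sub_nonneg.mpr (hx.2 (by simp [i, j, Fin.le_def]))
  have hi : ∀ k, x k ≤ x i := fun k => hx.2 (by simp only [i, Fin.le_def]; omega)
  have hj : ∀ k, x j ≤ x k := fun k => hx.2 (by simp [j, Fin.le_def])
  have hxi : 0 ≤ x i := by
    by_contra hneg
    have : ∑ k, x k < 0 := by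
      apply Finset.sum_neg
      · intro k _; linarith [hi k]
      · exact ⟨i, Finset.mem_univ _⟩
    linarith [hx.1]
  have hxj : x j ≤ 0 := by
    by_contra hneg
    have : 0 < ∑ k, x k := by
      apply Finset.sum_pos
      · intro k _; linarith [hj k]
      · exact ⟨i, Finset.mem_univ _⟩
    linarith [hx.1]
  have hQ : QQ x ≤ m * (x i - x j)^2 := by
    unfold QQ
    calc ∑ k, (x k)^2 ≤ ∑ k : Fin m, (x i - x j)^2 := by
          refine Finset.sum_le_sum fun k _ => ?_
          apply sq_le_sq'
          · linarith [hi k, hj k]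
          · linarith [hi k, hj k]
      _ = _ := by simp
  rcases le_total C (x i - x j) with h | h
  · linarith
  · have : (m:ℝ) * (x i - x j)^2 ≤ m * C^2 := by gcongr
    linarith

lemma QQ_continuous {m : ℕ} : Continuous (QQ : (Fin m → ℝ) → ℝ) := by
  unfold QQ; fun_prop

lemma contract_continuous {m : ℕ} (g : (Fin m → ℝ) → (Fin m → ℝ))
    (hg : ∀ a b, QQ (g a - g b) ≤ QQ (a - b)) : Continuous g := by
  rw [continuous_iff_continuousAt]
  intro a
  rw [ContinuousAt, tendsto_pi_nhds]
  intro j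
  have h1 : Filter.Tendsto (fun b => QQ (b - a)) (nhds a) (nhds 0) := by
    have : Continuous (fun b : Fin m → ℝ => QQ (b - a)) :=
      QQ_continuous.comp (continuous_id.sub continuous_const)
    have h := this.tendsto a
    simpa [QQ] using h
  have h2 : Filter.Tendsto (fun b => Real.sqrt (QQ (b - a))) (nhds a) (nhds 0) := by
    have := h1.sqrt
    simpa using this
  rw [tendsto_iff_dist_tendsto_zero]
  refine squeeze_zero (fun _ => dist_nonneg) (fun b => ?_) h2
  rw [Real.dist_eq]
  apply Real.abs_le_sqrt
  exact (sq_le_QQ (g b - g a) j).trans (hg b a)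

lemma QQ_smul {m : ℕ} (r : ℝ) (x : Fin m → ℝ) : QQ (r • x) = r^2 * QQ x := by
  unfold QQ
  rw [Finset.mul_sum]
  exact Finset.sum_congr rfl fun j _ => by simp; ring

lemma exists_fixed {m : ℕ} (g : (Fin m → ℝ) → (Fin m → ℝ))
    (hg : ∀ a b, QQ (g a - g b) ≤ QQ (a - b)) (R : ℝ) (hR : 0 ≤ R)
    (hinv : ∀ x, InV m x → QQ x ≤ R → InV m (g x) ∧ QQ (g x) ≤ R) :
    ∃ x, InV m x ∧ g x = x := by
  have hgc := contract_continuous g hg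
  set K : Set (Fin m → ℝ) := {x | InV m x ∧ QQ x ≤ R} with hK
  have hclosed : IsClosed K := by
    have e : K = {x | ∑ j, x j = 0} ∩ {x | Monotone x} ∩ {x | QQ x ≤ R} := by
      ext x; simp [hK, InV]
    rw [e]
    refine IsClosed.inter (IsClosed.inter ?_ ?_) ?_
    · exact isClosed_eq (by fun_prop) continuous_const
    · exact isClosed_monotone
    · exact isClosed_le QQ_continuous continuous_const
  have hbdd : Bornology.IsBounded K := by
    refine (Metric.isBounded_closedBall (x := (0 : Fin m → ℝ)) (r := Real.sqrt R)).subset ?_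
    intro x hx
    rw [Metric.mem_closedBall, dist_zero_right, pi_norm_le_iff_of_nonneg (Real.sqrt_nonneg _)]
    intro j
    rw [Real.norm_eq_abs]
    exact Real.abs_le_sqrt ((sq_le_QQ x j).trans hx.2)
  have hcomp : IsCompact K := Metric.isCompact_of_isClosed_isBounded hclosed hbdd
  have hne : K.Nonempty := ⟨0, ⟨by simp, fun _ _ _ => le_rfl⟩, by simpa [QQ] using hR⟩
  have happrox : ∀ e : ℝ, 0 < e → e ≤ 1 → ∃ x ∈ K, (1 - e) • g x = x := by
    intro e he he1
    have hc : Continuous (fun x => QQ ((1 - e) • g x - x)) :=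
      QQ_continuous.comp (f := fun x => (1 - e) • g x - x) (by fun_prop)
    obtain ⟨x, hxK, hmin⟩ := hcomp.exists_isMinOn hne hc.continuousOn
    refine ⟨x, hxK, ?_⟩
    have hgx := hinv x hxK.1 hxK.2
    have hyK : (1 - e) • g x ∈ K := by
      refine ⟨⟨?_, ?_⟩, ?_⟩
      · simp only [Pi.smul_apply, smul_eq_mul]
        rw [← Finset.mul_sum, hgx.1.1, mul_zero]
      · intro a b hab
        simp only [Pi.smul_apply, smul_eq_mul]
        exact mul_le_mul_of_nonneg_left (hgx.1.2 hab) (by linarith)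
      · rw [QQ_smul]
        have := QQ_nonneg (g x)
        have h1 : (1 - e)^2 ≤ 1 := by nlinarith
        nlinarith
    have h1 : QQ ((1 - e) • g x - x) ≤ QQ ((1 - e) • g ((1 - e) • g x) - (1 - e) • g x) :=
      hmin hyK
    rw [← smul_sub, QQ_smul] at h1
    have h2 := hg ((1 - e) • g x) x
    have h0 := QQ_nonneg ((1 - e) • g x - x)
    have h3 : (1 - e)^2 * QQ (g ((1 - e) • g x) - g x) ≤ (1 - e)^2 * QQ ((1 - e) • g x - x) := by
      gcongr
    have h4 : (1 - e)^2 ≤ 1 - e := by nlinarith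
    have h5 : QQ ((1 - e) • g x - x) ≤ 0 := by nlinarith
    exact sub_eq_zero.mp (QQ_eq_zero h5)
  have hc : Continuous (fun x => QQ (g x - x)) := QQ_continuous.comp (hgc.sub continuous_id)
  obtain ⟨x, hxK, hmin⟩ := hcomp.exists_isMinOn hne hc.continuousOn
  refine ⟨x, hxK.1, ?_⟩
  have hb : ∀ e : ℝ, 0 < e → e ≤ 1 → QQ (g x - x) ≤ e * R := by
    intro e he he1
    obtain ⟨y, hyK, hy⟩ := happrox e he he1
    have h1 : QQ (g x - x) ≤ QQ (g y - y) := hmin hyK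
    have e1 : g y - y = e • g y := by
      nth_rewrite 2 [← hy]
      rw [sub_smul, one_smul]; abel
    rw [e1, QQ_smul] at h1
    have h2 := (hinv y hyK.1 hyK.2).2
    have h3 : e^2 * QQ (g y) ≤ e^2 * R := by gcongr
    have h4 : e^2 * R ≤ e * R := by
      apply mul_le_mul_of_nonneg_right _ hR
      nlinarith
    linarith
  have : QQ (g x - x) ≤ 0 := by
    by_contra hpos
    push Not at hpos
    have hmn : 0 < min 1 (QQ (g x - x) / (2 * (R + 1))) := lt_min one_pos (by positivity)
    have h := hb _ hmn (min_le_left _ _)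
    have h2 : min 1 (QQ (g x - x) / (2 * (R + 1))) * R ≤ QQ (g x - x) / (2 * (R + 1)) * R :=
      mul_le_mul_of_nonneg_right (min_le_right _ _) hR
    have h3 : QQ (g x - x) / (2 * (R + 1)) * (2 * (R + 1)) = QQ (g x - x) := by
      field_simp
    have h4 : 0 < QQ (g x - x) / (2 * (R + 1)) := by positivity
    nlinarith
  exact sub_eq_zero.mp (QQ_eq_zero this)

/-- When `gcd(m,n) = 1` and `p` is an `(m,n)`-parking function, every orbit
`{p^k ⋅ x}` is eventually periodic with period dividing `m`: there is `k ≥ 0` with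
`p^{k+m} ⋅ x = p^k ⋅ x`.  Here `p^k ⋅ x = stepsV m (fun i => p (i % n)) x (n*k)`. -/
theorem orbit_eventually_periodic (m n : ℕ) (hm : 0 < m) (hn : 0 < n)
    (hcop : Nat.gcd m n = 1) (p : ℕ → Fin m) (hpark : IsParking m n p)
    (x : Fin m → ℝ) (hx : InV m x) :
    ∃ k : ℕ, stepsV m (fun i => p (i % n)) x (n * (k + m)) =
      stepsV m (fun i => p (i % n)) x (n * k) := by

  set q : ℕ → Fin m := fun i => p (i % n) with hq
  have hadd : ∀ (y : Fin m → ℝ) (k t : ℕ),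
      stepsV m q y (n * k + t) = stepsV m q (stepsV m q y (n * k)) t :=
    fun y k t => steps_add p y k t
  obtain ⟨R0, hR0, hball⟩ := ball_invariant hm hcop p hpark
  -- the fixed point
  obtain ⟨w, hwV, hw⟩ := exists_fixed (fun y => stepsV m q y n)
    (fun a b => steps_contract q a b n) R0 hR0
    (fun y hy hyR => ⟨steps_InV q y hy n, hball R0 le_rfl y hy hyR⟩)
  have hwk : ∀ k, stepsV m q w (n * k) = w := by
    intro k
    induction k with
    | zero => rfl
    | succ k ih => rw [Nat.mul_succ, hadd, ih, hw]
  have hres : (∀ i j, ∃ a : ℤ, w i - w j = a) ∧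
      (∀ i j, (∃ a : ℤ, w i - w j = m * a) → i = j) := by
    obtain ⟨s, c, h⟩ := steps_track q w n
    rw [hw] at h
    exact fixed_residues hm hcop w s c h
  -- the `m`-th power fixes a neighbourhood of `w`
  have hloc : ∀ d : Fin m → ℝ, (∀ j, |d j| < 1/2) → stepsV m q (w + d) (n * m) = w + d := by
    obtain ⟨s, c, h⟩ := steps_local q w hres.1 hres.2 (n * m)
    have h0 : ∀ j, w j = w (s j) - (n * m : ℕ) + m * c j := by
      intro j
      have := h 0 (by intro j; norm_num) j
      rw [add_zero, hwk] at this
      simpa using this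
    have hs : ∀ j, s j = j := by
      intro j
      apply hres.2
      refine ⟨n - c j, ?_⟩
      have := h0 j
      push_cast at this ⊢
      linarith
    intro d hd
    funext j
    rw [h d hd j]
    have := h0 j
    rw [hs j] at this ⊢
    simp only [Pi.add_apply]
    linarith
  -- equality case
  have hrigid : ∀ z : Fin m → ℝ, QQ (z - w) ≤ QQ (stepsV m q z (n * m) - w) →
      stepsV m q z (n * m) = z := by
    intro z hz
    set u := z - w with hu
    set v := stepsV m q z (n * m) - w with hv
    have hQ0 := QQ_nonneg u
    set e : ℝ := 1 / (4 * (QQ u + 1)) with he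
    have hepos : 0 < e := by positivity
    have hesmall : ∀ j, |(e • u) j| < 1/2 := by
      intro j
      have h1 := sq_le_QQ u j
      have h2 : |u j| ≤ QQ u + 1 := by
        rw [abs_le]; constructor <;> nlinarith
      simp only [Pi.smul_apply, smul_eq_mul, abs_mul, abs_of_pos hepos]
      have h3 : e * (QQ u + 1) = 1/4 := by rw [he]; field_simp
      have h4 : e * |u j| ≤ e * (QQ u + 1) := by gcongr
      linarith
    have h1 := steps_contract q z (w + e • u) (n * m)
    rw [hloc _ hesmall] at h1
    have e1 : stepsV m q z (n * m) - (w + e • u) = v - e • u := by rw [hv]; abel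
    have e2 : z - (w + e • u) = u - e • u := by rw [hu]; abel
    rw [e1, e2] at h1
    have hexp : ∀ a b : Fin m → ℝ, ∀ r : ℝ,
        QQ (a - r • b) = QQ a - 2 * r * (∑ j, a j * b j) + r^2 * QQ b := by
      intro a b r
      unfold QQ
      rw [Finset.mul_sum, Finset.mul_sum, ← Finset.sum_sub_distrib, ← Finset.sum_add_distrib]
      refine Finset.sum_congr rfl fun j _ => ?_
      simp only [Pi.sub_apply, Pi.smul_apply, smul_eq_mul]; ring
    rw [hexp, hexp] at h1
    have huu : ∑ j, u j * u j = QQ u := Finset.sum_congr rfl fun j _ => by ring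
    rw [huu] at h1
    have h2 : QQ u ≤ ∑ j, v j * u j := by
      have : e * QQ u ≤ e * ∑ j, v j * u j := by linarith
      exact le_of_mul_le_mul_left this hepos
    have h3 : QQ v ≤ QQ u := by
      have := steps_contract q z w (n * m)
      rw [hwk] at this
      exact this
    have h4 := hexp v u 1
    rw [one_smul] at h4
    have h5 : QQ (v - u) ≤ 0 := by linarith
    have h6 := sub_eq_zero.mp (QQ_eq_zero h5)
    rw [hv, hu] at h6
    exact sub_left_inj.mp h6
  -- finiteness of the orbit
  set z : ℕ → (Fin m → ℝ) := fun k => stepsV m q x (n * (k * m)) with hz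
  have hzs : ∀ k, z (k+1) = stepsV m q (z k) (n * m) := by
    intro k
    simp only [hz]
    rw [← hadd]; congr 1; ring
  set R := max R0 (QQ x) with hR
  have hbound : ∀ k, QQ (stepsV m q x (n * k)) ≤ R := by
    intro k
    induction k with
    | zero => exact le_max_right _ _
    | succ k ih =>
      rw [Nat.mul_succ, hadd]
      exact hball R (le_max_left _ _) _ (steps_InV q x hx _) ih
  have hRnn : 0 ≤ R := hR0.trans (le_max_left _ _)
  obtain ⟨B, hB⟩ : ∃ B : ℕ, Real.sqrt R + ∑ j, |x j| ≤ B := exists_nat_ge _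
  have hfin : (Set.range z).Finite := by
    have hF : (Set.Finite (Set.pi Set.univ (fun _ : Fin m => Set.Icc (-(B:ℤ)) B))) :=
      Set.Finite.pi' (fun _ => Set.finite_Icc _ _) |>.subset (by
        intro f hf j; exact hf j (Set.mem_univ _))
    have hF2 := ((Set.finite_univ (α := Equiv.Perm (Fin m))).prod hF).image
      (fun sc => fun j => x (sc.1 j) + m * ((sc.2 j : ℤ) : ℝ))
    refine hF2.subset ?_
    rintro _ ⟨k, rfl⟩
    obtain ⟨s, c, h⟩ := steps_track q x (n * (k * m))
    refine ⟨(s, fun j => c j - n * k), ⟨Set.mem_univ _, ?_⟩, ?_⟩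
    · intro j _
      have h1 := h j
      have h2 : |z k j| ≤ Real.sqrt R :=
        Real.abs_le_sqrt ((sq_le_QQ (z k) j).trans (hbound (k * m)))
      have h3 : |x (s j)| ≤ ∑ j, |x j| :=
        Finset.single_le_sum (f := fun j => |x j|) (fun _ _ => abs_nonneg _) (Finset.mem_univ (s j))
      have h4 : z k j - x (s j) = m * ((c j - n * k : ℤ) : ℝ) := by
        simp only [hz]; rw [h1]; push_cast; ring
      have h5 : |(m:ℝ) * ((c j - n * k : ℤ) : ℝ)| ≤ B := by
        rw [← h4]; exact (abs_sub _ _).trans (by linarith)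
      have h6 : |(m:ℤ) * (c j - n * k)| ≤ B := by exact_mod_cast h5
      have h7 : |c j - n * k| ≤ |(m:ℤ) * (c j - n * k)| := by
        rw [abs_mul]
        have : (1:ℤ) ≤ |(m:ℤ)| := by rw [abs_of_nonneg (by positivity)]; exact_mod_cast hm
        nlinarith [abs_nonneg (c j - n * k)]
      exact abs_le.mp (h7.trans h6)
    · funext j
      simp only [hz]
      rw [h j]; push_cast; ring
  have hnotinj : ∃ a b, a < b ∧ z a = z b := by
    by_contra hcon
    push Not at hcon
    apply Set.infinite_range_of_injective (f := z) _ hfin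
    intro a b hab
    rcases lt_trichotomy a b with h | h | h
    · exact absurd hab (hcon a b h)
    · exact h
    · exact absurd hab.symm (hcon b a h)
  have hanti : Antitone (fun k => QQ (z k - w)) := by
    apply antitone_nat_of_succ_le
    intro k
    rw [hzs]
    have := steps_contract q (z k) w (n * m)
    rwa [hwk] at this
  obtain ⟨a, b, hab, hzab⟩ := hnotinj
  refine ⟨a * m, ?_⟩
  rw [mul_add, hadd]
  apply hrigid
  have h1 : QQ (z b - w) ≤ QQ (z (a+1) - w) := hanti (by omega)
  rw [← hzab, hzs] at h1
  exact h1
end
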